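/- Value iteration converges: in a finite Markov decision process with discount factor γ ∈ [0,1), the Bellman optimality operator T has a unique fixed point V* : S → ℝ (the optimal value function), and for every initial value function V₀ the iterates Vₙ = T^[n] V₀ converge to V*; moreover max_{s} |Vₙ(s) − V*(s)| ≤ γⁿ · max_{s} |V₀(s) − V*(s)| for every n, so Vₙ(s) → V*(s) for every state s. -/

import Mathlib

open Finset Real Filter

/-- Value iteration converges: the Bellman optimality operator of a finite MDP with
discount factor `γ ∈ [0,1)` has a unique fixed point `V*`, the iterates from any
initial value function converge to it, and the supremum-norm error contracts like `γ^n`. -/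
theorem value_iteration_converges
    {S A : Type*} [Fintype S] [Nonempty S] [Fintype A] [Nonempty A]
    (P : S → A → S → ℝ) (hP0 : ∀ s a s', 0 ≤ P s a s') (hP1 : ∀ s a, ∑ s', P s a s' = 1)
    (R : S → A → ℝ) (γ : ℝ) (hγ0 : 0 ≤ γ) (hγ1 : γ < 1)
    (T : (S → ℝ) → (S → ℝ))
    (hT : ∀ V s, T V s = Finset.univ.sup' Finset.univ_nonempty
        (fun a => R s a + γ * ∑ s', P s a s' * V s')) :
    ∃ Vstar : S → ℝ, T Vstar = Vstar ∧ (∀ W : S → ℝ, T W = W → W = Vstar) ∧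
      ∀ V₀ : S → ℝ,
        (∀ n : ℕ, Finset.univ.sup' Finset.univ_nonempty
              (fun s => |T^[n] V₀ s - Vstar s|)
            ≤ γ ^ n * Finset.univ.sup' Finset.univ_nonempty
              (fun s => |V₀ s - Vstar s|)) ∧
        (∀ s : S, Tendsto (fun n : ℕ => T^[n] V₀ s) atTop (nhds (Vstar s))) := by
  have one : ∀ (V W : S → ℝ) (s : S), T V s ≤ T W s + γ * dist V W := by
    intro V W s
    rw [hT V s]
    apply Finset.sup'_le
    intro a _
    have h1 : R s a + γ * ∑ s', P s a s' * W s' ≤ T W s := by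
      rw [hT W s]
      exact Finset.le_sup' (fun a => R s a + γ * ∑ s', P s a s' * W s') (Finset.mem_univ a)
    have h2 : ∑ s', P s a s' * V s' ≤ ∑ s', P s a s' * W s' + dist V W := by
      have h3 : ∑ s', P s a s' * V s' ≤ ∑ s', (P s a s' * W s' + P s a s' * dist V W) := by
        apply Finset.sum_le_sum
        intro s' _
        rw [← mul_add]
        apply mul_le_mul_of_nonneg_left _ (hP0 s a s')
        have h4 := dist_le_pi_dist V W s'
        rw [Real.dist_eq] at h4
        linarith [le_abs_self (V s' - W s')]
      rwa [Finset.sum_add_distrib, ← Finset.sum_mul, hP1, one_mul] at h3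
    have h5 := mul_le_mul_of_nonneg_left h2 hγ0
    rw [mul_add] at h5
    linarith
  have lip : ∀ V W : S → ℝ, dist (T V) (T W) ≤ γ * dist V W := by
    intro V W
    rw [dist_pi_le_iff (mul_nonneg hγ0 dist_nonneg)]
    intro s
    rw [Real.dist_eq, abs_le]
    have h1 := one V W s
    have h2 := one W V s
    rw [dist_comm W V] at h2
    constructor <;> linarith
  have sup_eq : ∀ V W : S → ℝ, Finset.univ.sup' Finset.univ_nonempty
      (fun s => |V s - W s|) = dist V W := by
    intro V W
    apply le_antisymm
    · apply Finset.sup'_le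
      intro s _
      exact dist_le_pi_dist V W s
    · rw [dist_pi_le_iff']
      intro s
      exact Finset.le_sup' (fun s => |V s - W s|) (Finset.mem_univ s)
  have hc : ContractingWith (⟨γ, hγ0⟩ : NNReal) T :=
    ⟨by exact_mod_cast hγ1, LipschitzWith.of_dist_le_mul lip⟩
  have hfix : T (ContractingWith.fixedPoint T hc) = ContractingWith.fixedPoint T hc :=
    hc.fixedPoint_isFixedPt
  refine ⟨ContractingWith.fixedPoint T hc, hfix, fun W hW => hc.fixedPoint_unique hW, ?_⟩
  intro V₀
  refine ⟨?_, fun s => (tendsto_pi_nhds.mp (hc.tendsto_iterate_fixedPoint V₀)) s⟩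
  intro n
  rw [sup_eq, sup_eq]
  induction n with
  | zero => simp
  | succ k ih =>
    rw [Function.iterate_succ_apply', pow_succ', mul_assoc]
    have h := lip (T^[k] V₀) (ContractingWith.fixedPoint T hc)
    rw [hfix] at h
    exact h.trans (mul_le_mul_of_nonneg_left ih hγ0)
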